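/- For all positive integers d and k with d ≤ √n/10, and every multilinear polynomial P of degree at most d over ℤ/2^kℤ, the fraction of points x ∈ {0,1}^n at which P(x) = Maj_{n,k}(x) is at most 1/2 + 10d/√n, where Maj_{n,k} is the k-lift of the majority function (Maj_{n,k}(x) = 2^{k−1} if |x| > n/2 and 0 otherwise). -/

import Mathlib

/-- Hamming weight of a Boolean vector. -/
def wt {n : ℕ} (x : Fin n → Bool) : ℕ :=
  (Finset.univ.filter (fun i => x i = true)).card

/-- Evaluation of the multilinear polynomial with coefficients `c` at the Boolean point `x`. -/
def evalML {n k : ℕ} (c : Finset (Fin n) → ZMod (2 ^ k)) (x : Fin n → Bool) : ZMod (2 ^ k) :=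
  ∑ S : Finset (Fin n), c S * ∏ i ∈ S, (if x i then 1 else 0)

/-!
A multilinear polynomial evaluated at the indicator vector of `T` is the sum of its coefficients
over the subsets of `T`, so only the additive group of the coefficients matters, and `2 ^ (k - 1)`
can be any nonzero element `v` of any abelian group.

Suppose `P` has degree at most `d` and equals `v` times the indicator of `m < |T|` outside a set `F`
with fewer elements than there are monomials of degree at most `D`. By linear algebra some integer
polynomial `Q` of degree at most `D`, with coprime coefficients, vanishes on `F`. Then `Q * P`
equals `Q * v` above level `m` and `0` up to level `m` everywhere, exceptions included. If
`D + d ≤ m`, a polynomial of degree at most `D + d` vanishing up to level `m` is zero, so `Q * v`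
vanishes above level `m`. If moreover `D + m < n`, reflecting the cube shows that `Q * v` is zero
too, and coprimality gives `v = 0`. For majority take `m = n / 2` and `D = n / 2 - d`: the number of
sets of size at most `D` falls short of `2 ^ n / 2` by at most `d` middle binomial coefficients.
-/

open Finset

section Zeta

variable {ι A : Type*} [AddCommMonoid A]

/-- The zeta transform of `c` over the subset lattice: the value at the indicator vector of `T` of
the multilinear polynomial whose coefficient at the monomial `∏ i ∈ S, x i` is `c S`. -/
def zetaTransform (c : Finset ι → A) (T : Finset ι) : A :=
  ∑ S ∈ T.powerset, c S

/-- The multilinear polynomial with coefficients `c` has degree at most `d`. -/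
def DegreeLE (c : Finset ι → A) (d : ℕ) : Prop :=
  ∀ S, c S ≠ 0 → #S ≤ d

theorem zetaTransform_smul_const {R : Type*} [Semiring R] [Module R A] (q : Finset ι → R) (v : A)
    (T : Finset ι) :
    zetaTransform (fun S ↦ q S • v) T = zetaTransform q T • v :=
  (sum_smul ..).symm

theorem zetaTransform_eq_sum_ite [Fintype ι] [DecidableEq ι] (c : Finset ι → A) (T : Finset ι) :
    zetaTransform c T = ∑ S, if S ⊆ T then c S else 0 := by
  rw [← sum_filter, filter_subset_univ, zetaTransform]

theorem DegreeLE.eq_zero_of_forall_card_le {c : Finset ι → A} {d : ℕ} (hc : DegreeLE c d)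
    (hzero : ∀ T, #T ≤ d → zetaTransform c T = 0) : c = 0 := by
  funext S
  induction S using Finset.strongInduction with
  | H S ih =>
    by_contra hS
    have hsum : zetaTransform c S = c S :=
      sum_eq_single_of_mem S (mem_powerset_self S) fun U hU hne ↦
        ih U ((mem_powerset.1 hU).ssubset_of_ne hne)
    exact hS (hsum ▸ hzero S (hc S hS))

end Zeta

section Reflection

variable {ι A : Type*} [Fintype ι] [DecidableEq ι] [AddCommGroup A]

/-- The coefficients of the polynomial obtained from the one with coefficients `c` by substituting
`1 - x i` for every variable `x i`. -/
def reflectCoeff (c : Finset ι → A) (S : Finset ι) : A :=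
  (-1 : ℤ) ^ #S • ∑ U with S ⊆ U, c U

theorem degreeLE_reflectCoeff {c : Finset ι → A} {d : ℕ} (hc : DegreeLE c d) :
    DegreeLE (reflectCoeff c) d := by
  intro S hS
  obtain ⟨U, hU, hcU⟩ := exists_ne_zero_of_sum_ne_zero (right_ne_zero_of_smul hS)
  exact (card_le_card (mem_filter.1 hU).2).trans (hc U hcU)

theorem zetaTransform_reflectCoeff (c : Finset ι → A) (T : Finset ι) :
    zetaTransform (reflectCoeff c) T = zetaTransform c Tᶜ := by
  have hsigns (U : Finset ι) :
      (∑ S ∈ T.powerset with S ⊆ U, (-1 : ℤ) ^ #S) = if U ⊆ Tᶜ then 1 else 0 := by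
    have hpow : {S ∈ T.powerset | S ⊆ U} = (T ∩ U).powerset := by
      ext S
      simp only [mem_filter, mem_powerset, subset_inter_iff]
    rw [hpow, sum_powerset_neg_one_pow_card]
    simp only [← disjoint_iff_inter_eq_empty, disjoint_comm, subset_compl_iff_disjoint_right]
  calc zetaTransform (reflectCoeff c) T
      = ∑ U, (∑ S ∈ T.powerset with S ⊆ U, (-1 : ℤ) ^ #S) • c U := by
        simp only [zetaTransform, reflectCoeff, sum_filter, smul_sum, sum_smul, ite_smul, smul_ite,
          zero_smul, smul_zero]
        exact sum_comm
    _ = zetaTransform c Tᶜ := by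
        simp only [hsigns, ite_smul, one_smul, zero_smul, zetaTransform_eq_sum_ite]

theorem DegreeLE.eq_zero_of_forall_card_compl_le {c : Finset ι → A} {d : ℕ} (hc : DegreeLE c d)
    (hzero : ∀ T, #Tᶜ ≤ d → zetaTransform c T = 0) : c = 0 := by
  have hreflect : reflectCoeff c = 0 :=
    (degreeLE_reflectCoeff hc).eq_zero_of_forall_card_le fun T hT ↦ by
      rw [zetaTransform_reflectCoeff, hzero _ (by rwa [compl_compl])]
  refine hc.eq_zero_of_forall_card_le fun T _ ↦ ?_
  rw [← compl_compl T, ← zetaTransform_reflectCoeff, hreflect]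
  exact sum_const_zero

end Reflection

section Product

variable {ι R A : Type*} [Fintype ι] [DecidableEq ι] [Semiring R] [AddCommMonoid A] [Module R A]

/-- The coefficients of the multilinear polynomial that represents, on the Boolean cube, the product
of the polynomials with coefficients `q` and `c`: there `x i ^ 2 = x i`, so monomials multiply by
taking unions of their supports. -/
def unionConv (q : Finset ι → R) (c : Finset ι → A) (U : Finset ι) : A :=
  ∑ z : Finset ι × Finset ι, if z.1 ∪ z.2 = U then q z.1 • c z.2 else 0

theorem degreeLE_unionConv {q : Finset ι → R} {c : Finset ι → A} {a b : ℕ} (hq : DegreeLE q a)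
    (hc : DegreeLE c b) : DegreeLE (unionConv q c) (a + b) := by
  intro U hU
  obtain ⟨z, -, hz⟩ := exists_ne_zero_of_sum_ne_zero hU
  obtain ⟨rfl, hsmul⟩ := ite_ne_right_iff.1 hz
  exact (card_union_le _ _).trans
    (add_le_add (hq _ (left_ne_zero_of_smul hsmul)) (hc _ (right_ne_zero_of_smul hsmul)))

theorem zetaTransform_unionConv (q : Finset ι → R) (c : Finset ι → A) (T : Finset ι) :
    zetaTransform (unionConv q c) T = zetaTransform q T • zetaTransform c T := by
  calc zetaTransform (unionConv q c) T
      = ∑ z : Finset ι × Finset ι, if z.1 ∪ z.2 ⊆ T then q z.1 • c z.2 else 0 := by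
        simp only [zetaTransform, unionConv]
        rw [sum_comm]
        simp only [sum_ite_eq, mem_powerset]
    _ = zetaTransform q T • zetaTransform c T := by
        simp only [zetaTransform_eq_sum_ite, sum_smul_sum, Fintype.sum_prod_type,
          union_subset_iff, ite_smul, smul_ite, zero_smul, smul_zero, ← ite_and, and_comm]

end Product

section PrimitiveSolutions

theorem exists_gcd_eq_one_of_finrank_lt {κ R N : Type*} [Fintype κ] [CommRing R] [IsDomain R]
    [NormalizedGCDMonoid R] [AddCommGroup N] [Module R N] [Module.Finite R N]
    [Module.IsTorsionFree R N] (L : (κ → R) →ₗ[R] N) (hlt : Module.finrank R N < Fintype.card κ) :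
    ∃ q, L q = 0 ∧ univ.gcd q = 1 := by
  have hker : LinearMap.ker L ≠ ⊥ := fun hbot ↦ hlt.not_ge <| by
    simpa only [Module.finrank_fintype_fun_eq_card] using
      LinearMap.finrank_le_finrank_of_injective (LinearMap.ker_eq_bot.1 hbot)
  obtain ⟨u, hu, hu0⟩ := (Submodule.ne_bot_iff _).1 hker
  obtain ⟨i, hi⟩ := Function.ne_iff.1 hu0
  obtain ⟨q, huq, hq⟩ := univ.extract_gcd u ⟨i, mem_univ i⟩
  have hgcd : univ.gcd u ≠ 0 := fun h ↦ hi (gcd_eq_zero_iff.1 h i (mem_univ i))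
  have hsmul : univ.gcd u • L q = 0 := by
    rw [← map_smul, ← LinearMap.mem_ker.1 hu]
    exact congrArg L (funext fun j ↦ (huq j (mem_univ j)).symm)
  exact ⟨q, (smul_eq_zero.1 hsmul).resolve_left hgcd, hq⟩

theorem eq_zero_of_forall_zsmul_eq_zero_of_gcd_eq_one {κ A : Type*} [AddGroup A] {s : Finset κ}
    {q : κ → ℤ} (hq : s.gcd q = 1) {v : A} (hv : ∀ i ∈ s, q i • v = 0) : v = 0 := by
  have hdvd : (addOrderOf v : ℤ) ∣ s.gcd q :=
    dvd_gcd fun i hi ↦ addOrderOf_dvd_iff_zsmul_eq_zero.2 (hv i hi)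
  rw [hq] at hdvd
  exact AddMonoid.addOrderOf_eq_one_iff.1 (Nat.dvd_one.1 (mod_cast hdvd))

theorem exists_primitive_zetaTransform_eq_zero {ι : Type*} [Fintype ι] {D : ℕ}
    {F : Finset (Finset ι)} (hF : #F < #{S : Finset ι | #S ≤ D}) :
    ∃ q : Finset ι → ℤ, DegreeLE q D ∧ (∀ T ∈ F, zetaTransform q T = 0) ∧ univ.gcd q = 1 := by
  let evalOnF : (Finset ι → ℤ) →ₗ[ℤ] F → ℤ :=
    LinearMap.pi fun T ↦ ∑ S ∈ T.1.powerset, LinearMap.proj S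
  let highCoeffs : (Finset ι → ℤ) →ₗ[ℤ] {S : Finset ι // ¬ #S ≤ D} → ℤ :=
    LinearMap.funLeft ℤ ℤ Subtype.val
  have hlt : Module.finrank ℤ ((F → ℤ) × ({S : Finset ι // ¬ #S ≤ D} → ℤ)) <
      Fintype.card (Finset ι) := by
    rw [Module.finrank_prod, Module.finrank_fintype_fun_eq_card,
      Module.finrank_fintype_fun_eq_card, Fintype.card_coe, Fintype.card_subtype, ← card_univ,
      ← card_filter_add_card_filter_not (s := univ) fun S : Finset ι ↦ #S ≤ D]
    gcongr
  obtain ⟨q, hLq, hgcd⟩ := exists_gcd_eq_one_of_finrank_lt (evalOnF.prod highCoeffs) hlt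
  obtain ⟨hevalOnF, hhighCoeffs⟩ := Prod.ext_iff.1 hLq
  refine ⟨q, fun S hS ↦ ?_, fun T hT ↦ ?_, hgcd⟩
  · by_contra hcard
    exact hS (congrFun hhighCoeffs ⟨S, hcard⟩)
  · simpa [evalOnF, zetaTransform] using congrFun hevalOnF ⟨T, hT⟩

end PrimitiveSolutions

section Threshold

variable {ι A : Type*} [Fintype ι] [AddCommGroup A] {c : Finset ι → A} {d m : ℕ} {v : A}

theorem DegreeLE.card_filter_card_le_le_of_eq_threshold (hc : DegreeLE c d) (hv : v ≠ 0) {D : ℕ}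
    (hDd : D + d ≤ m) (hDm : D + m < Fintype.card ι) {F : Finset (Finset ι)}
    (hF : ∀ T ∉ F, zetaTransform c T = if m < #T then v else 0) :
    #{S : Finset ι | #S ≤ D} ≤ #F := by
  classical
  by_contra! hlt
  obtain ⟨q, hqD, hqF, hgcd⟩ := exists_primitive_zetaTransform_eq_zero hlt
  have hprod (T : Finset ι) :
      zetaTransform (unionConv q c) T = zetaTransform q T • if m < #T then v else 0 := by
    rw [zetaTransform_unionConv]
    by_cases hT : T ∈ F
    · rw [hqF T hT, zero_smul, zero_smul]
    · rw [hF T hT]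
  have hprod_zero : unionConv q c = 0 :=
    (degreeLE_unionConv hqD hc).eq_zero_of_forall_card_le fun T hT ↦ by
      rw [hprod, if_neg (by lia), smul_zero]
  have hqv_degree : DegreeLE (fun S ↦ q S • v) D := fun S hS ↦ hqD S (left_ne_zero_of_smul hS)
  have hqv_zero : (fun S ↦ q S • v) = 0 :=
    hqv_degree.eq_zero_of_forall_card_compl_le fun T hT ↦ by
      have hmT : m < #T := by
        have := card_add_card_compl T
        lia
      have hT := hprod T
      rw [hprod_zero, if_pos hmT] at hT
      rw [zetaTransform_smul_const, ← hT]
      exact sum_const_zero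
  exact hv (eq_zero_of_forall_zsmul_eq_zero_of_gcd_eq_one hgcd fun S _ ↦ congrFun hqv_zero S)

theorem DegreeLE.card_filter_card_add_le_le_card_filter_ne_threshold [DecidableEq A]
    (hc : DegreeLE c d) (hv : v ≠ 0) (hm : 2 * m < Fintype.card ι + d) :
    #{S : Finset ι | #S + d ≤ m} ≤
      #{T : Finset ι | zetaTransform c T ≠ if m < #T then v else 0} := by
  rcases lt_or_ge m d with hmd | hdm
  · have hempty : ({S : Finset ι | #S + d ≤ m} : Finset (Finset ι)) = ∅ :=
      filter_eq_empty_iff.2 fun S _ ↦ by lia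
    simp only [hempty, card_empty, zero_le]
  · simp only [← Nat.le_sub_iff_add_le hdm]
    refine hc.card_filter_card_le_le_of_eq_threshold hv (m := m) (by lia) (by lia) fun T hT ↦ ?_
    simpa only [mem_filter, mem_univ, true_and, not_not] using hT

end Threshold

section Counting

theorem two_pow_card_le_two_mul_card_filter_card_le_half (ι : Type*) [Fintype ι] :
    2 ^ Fintype.card ι ≤ 2 * #{S : Finset ι | #S ≤ Fintype.card ι / 2} := by
  classical
  have hcompl : #{S : Finset ι | ¬ #S ≤ Fintype.card ι / 2} ≤
      #{S : Finset ι | #S ≤ Fintype.card ι / 2} := by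
    refine card_le_card_of_injOn compl (fun S hS ↦ ?_) compl_injective.injOn
    simp only [coe_filter, mem_univ, true_and, Set.mem_ofPred_eq, card_compl] at hS ⊢
    lia
  have hsplit := card_filter_add_card_filter_not (s := univ)
    fun S : Finset ι ↦ #S ≤ Fintype.card ι / 2
  rw [card_univ, Fintype.card_finset] at hsplit
  lia

theorem card_filter_card_le_le_add_mul_choose_half (ι : Type*) [Fintype ι] (m d : ℕ) :
    #{S : Finset ι | #S ≤ m} ≤
      #{S : Finset ι | #S + d ≤ m} + d * (Fintype.card ι).choose (Fintype.card ι / 2) := by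
  classical
  have hcover : ({S : Finset ι | #S ≤ m} : Finset (Finset ι)) ⊆
      ({S | #S + d ≤ m} : Finset (Finset ι)) ∪
        (range d).biUnion fun i ↦ powersetCard (m - i) univ := by
    intro S hS
    simp only [mem_filter, mem_univ, true_and, mem_union, mem_biUnion, mem_range,
      mem_powersetCard_univ] at hS ⊢
    exact or_iff_not_imp_left.2 fun h ↦ ⟨m - #S, by lia, by lia⟩
  have hlayers : #((range d).biUnion fun i ↦ powersetCard (m - i) (univ : Finset ι)) ≤
      d * (Fintype.card ι).choose (Fintype.card ι / 2) := by
    simpa only [card_range] using card_biUnion_le_card_mul (range d) _ _ fun i _ ↦ by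
      simpa only [card_powersetCard, card_univ] using Nat.choose_le_middle (m - i) _
  exact ((card_le_card hcover).trans (card_union_le _ _)).trans (Nat.add_le_add_left hlayers _)

theorem centralBinom_sq_mul_le (m : ℕ) : m.centralBinom ^ 2 * (2 * m + 1) ≤ 16 ^ m := by
  induction m with
  | zero => simp
  | succ m ih =>
    refine Nat.le_of_mul_le_mul_left (c := (m + 1) ^ 2) ?_ (by positivity)
    calc (m + 1) ^ 2 * ((m + 1).centralBinom ^ 2 * (2 * (m + 1) + 1))
        = ((m + 1) * (m + 1).centralBinom) ^ 2 * (2 * (m + 1) + 1) := by ring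
      _ = m.centralBinom ^ 2 * (2 * m + 1) * (4 * (2 * m + 1) * (2 * m + 3)) := by
          rw [Nat.succ_mul_centralBinom_succ]; ring
      _ ≤ 16 ^ m * ((m + 1) ^ 2 * 16) := Nat.mul_le_mul ih (by nlinarith)
      _ = (m + 1) ^ 2 * 16 ^ (m + 1) := by ring

theorem choose_half_sq_mul_succ_le (n : ℕ) : n.choose (n / 2) ^ 2 * (n + 1) ≤ 4 ^ n := by
  obtain ⟨m, rfl | rfl⟩ := n.even_or_odd'
  · rw [Nat.mul_div_cancel_left m two_pos, ← Nat.centralBinom_eq_two_mul_choose, pow_mul]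
    exact centralBinom_sq_mul_le m
  · have hdouble : (m + 1).centralBinom = 2 * (2 * m + 1).choose m := by
      rw [Nat.centralBinom_eq_two_mul_choose, mul_add_one, Nat.choose_succ_succ,
        Nat.choose_symm_half, ← two_mul]
    have hbound := centralBinom_sq_mul_le (m + 1)
    have hpow : 16 ^ (m + 1) = 4 * 4 ^ (2 * m + 1) := by
      rw [pow_succ 4, pow_mul]
      ring
    rw [hdouble, hpow] at hbound
    rw [show (2 * m + 1) / 2 = m by lia]
    nlinarith

theorem choose_half_mul_sqrt_le (n : ℕ) : (n.choose (n / 2) : ℝ) * √n ≤ 2 ^ n := by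
  refine le_of_sq_le_sq ?_ (by positivity)
  calc ((n.choose (n / 2) : ℝ) * √n) ^ 2
      = (n.choose (n / 2) : ℝ) ^ 2 * n := by rw [mul_pow, Real.sq_sqrt n.cast_nonneg]
    _ ≤ (n.choose (n / 2) : ℝ) ^ 2 * (n + 1) := by gcongr; linarith
    _ ≤ 4 ^ n := mod_cast choose_half_sq_mul_succ_le n
    _ = (2 ^ n) ^ 2 := by rw [pow_right_comm]; norm_num

end Counting

section BooleanCube

theorem evalML_eq_zetaTransform {n k : ℕ} (c : Finset (Fin n) → ZMod (2 ^ k)) (x : Fin n → Bool) :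
    evalML c x = zetaTransform c {i | x i = true} := by
  simp only [evalML, zetaTransform_eq_sum_ite, prod_ite_zero, prod_const_one, mul_ite, mul_one,
    mul_zero, subset_iff, mem_filter, mem_univ, true_and]

theorem card_filter_bool_eq_card_filter_finset {ι : Type*} [Fintype ι] [DecidableEq ι]
    (p : Finset ι → Prop) [DecidablePred p] :
    #{x : ι → Bool | p {i | x i = true}} = #{T | p T} := by
  refine card_bij' (fun x _ ↦ ({i | x i = true} : Finset ι)) (fun T _ i ↦ decide (i ∈ T))
    ?_ ?_ ?_ ?_ <;> simp

theorem pow_pred_ne_zero_zmod {p k : ℕ} (hp : 1 < p) (hk : 1 ≤ k) :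
    (p ^ (k - 1) : ZMod (p ^ k)) ≠ 0 := by
  have hndvd : ¬ p ^ k ∣ p ^ (k - 1) := by
    rw [Nat.pow_dvd_pow_iff_le_right hp]
    lia
  exact_mod_cast mt (ZMod.natCast_eq_zero_iff _ _).1 hndvd

end BooleanCube

section Majority

variable {ι A : Type*} [Fintype ι] [AddCommGroup A] [DecidableEq A] {c : Finset ι → A} {d : ℕ}
  {v : A}

theorem DegreeLE.two_mul_card_filter_eq_majority_le (hc : DegreeLE c d) (hd : 1 ≤ d)
    (hv : v ≠ 0) :
    2 * #{T : Finset ι | zetaTransform c T = if Fintype.card ι < 2 * #T then v else 0} ≤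
      2 ^ Fintype.card ι + 2 * (d * (Fintype.card ι).choose (Fintype.card ι / 2)) := by
  simp only [← Nat.div_lt_iff_lt_mul two_pos, mul_comm 2 (#(_ : Finset ι))]
  have hne := hc.card_filter_card_add_le_le_card_filter_ne_threshold hv
    (m := Fintype.card ι / 2) (by lia)
  have hlow := card_filter_card_le_le_add_mul_choose_half ι (Fintype.card ι / 2) d
  have hhalf := two_pow_card_le_two_mul_card_filter_card_le_half ι
  have hsplit := card_filter_add_card_filter_not (s := univ) fun T : Finset ι ↦
    zetaTransform c T = if Fintype.card ι / 2 < #T then v else 0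
  rw [card_univ, Fintype.card_finset] at hsplit
  lia

theorem stmt17_general [Nonempty ι] (hc : DegreeLE c d) (hd : 1 ≤ d) (hv : v ≠ 0) :
    (#{T : Finset ι | zetaTransform c T = if Fintype.card ι < 2 * #T then v else 0} : ℝ) ≤
      (1 / 2 + d / √(Fintype.card ι)) * 2 ^ Fintype.card ι := by
  set n := Fintype.card ι
  have hsqrt : 0 < √(n : ℝ) := Real.sqrt_pos.2 (mod_cast Fintype.card_pos)
  have hcount : (2 * #{T : Finset ι | zetaTransform c T = if n < 2 * #T then v else 0} : ℝ) ≤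
      2 ^ n + 2 * (d * n.choose (n / 2)) := mod_cast hc.two_mul_card_filter_eq_majority_le hd hv
  have hchoose : (d * n.choose (n / 2) : ℝ) ≤ d * (2 ^ n / √n) := by
    gcongr
    exact (le_div_iff₀ hsqrt).2 (choose_half_mul_sqrt_le n)
  calc (#{T : Finset ι | zetaTransform c T = if n < 2 * #T then v else 0} : ℝ)
      ≤ 1 / 2 * 2 ^ n + d * (2 ^ n / √n) := by linarith
    _ = (1 / 2 + d / √n) * 2 ^ n := by ring

end Majority

/-- `γ_{d,k}(Maj_n) ≤ 1/2 + 10d/√n`: every multilinear polynomial of degree at most `d`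
over `ℤ/2^kℤ` agrees with the `k`-lift of the majority function (which is `2^{k-1}` when
`|x| > n/2` and `0` otherwise) on at most a `1/2 + 10d/√n` fraction of Boolean points. -/
theorem stmt17 (n d k : ℕ) (hn : 1 ≤ n) (hd : 1 ≤ d) (hk : 1 ≤ k)
    (c : Finset (Fin n) → ZMod (2 ^ k)) (hdeg : ∀ S, c S ≠ 0 → S.card ≤ d) :
    ((Finset.univ.filter (fun x : Fin n → Bool =>
        evalML c x = (if n < 2 * wt x then (2 ^ (k - 1) : ZMod (2 ^ k)) else 0))).card : ℝ)
      ≤ (1 / 2 + 10 * d / Real.sqrt n) * 2 ^ n := by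
  have : Nonempty (Fin n) := ⟨⟨0, hn⟩⟩
  have hbound := stmt17_general (c := c) hdeg hd (pow_pred_ne_zero_zmod one_lt_two hk)
  rw [← card_filter_bool_eq_card_filter_finset, Fintype.card_fin] at hbound
  simp only [evalML_eq_zetaTransform]
  refine hbound.trans ?_
  gcongr
  linarith
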